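/- arXiv:1811.05624 — 2 statements merged into one kernel-verified Lean document; each statement's English description precedes it below -/
import Mathlib

section
/- Let m ≥ 2 be an integer, let t_1, …, t_m be positive real numbers, let λ be a real number with 0 < λ < 1, let η be a real number with η ≥ λ/2, and let C > 0 be a real number. Then η·∑_{j=1}^m t_j² + C·∑_{j=1}^m λ^{m−j}·t_j + ∑_{1≤i<j≤m} λ^{j−i}·t_i·t_j < η·(∑_{j=1}^m t_j)² + C·(∑_{j=1}^m t_j). -/
open Finset

/-!
Expanding the square, each product `t i * t j` with `i < j` has coefficient `2 * eta` for the
original node and `lam ^ (j - i) ≤ lam` for the chain; hence `lam ≤ 2 * eta` makes the chain no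
better off on its own efforts. The strict loss is on the successors' contribution, which every
replica but the last sees discounted.
-/

section SqSum

variable {R : Type*} [CommSemiring R]

lemma sq_sum_eq_sum_sq_add_two_mul_sum_lt {ι : Type*} [LinearOrder ι] (s : Finset ι) (f : ι → R) :
    (∑ i ∈ s, f i) ^ 2 = ∑ i ∈ s, f i ^ 2 + 2 * ∑ i ∈ s, ∑ j ∈ s with i < j, f i * f j := by
  induction s using Finset.induction_on_max with
  | empty => simp
  | insert a s ha ih =>
    have ha_notMem : a ∉ s := fun h => (ha a h).false
    have h_above_max : {j ∈ insert a s | a < j} = ∅ := by grind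
    have h_above : ∀ i ∈ s, {j ∈ insert a s | i < j} = insert a {j ∈ s | i < j} := by grind
    have h_pairs : ∑ i ∈ insert a s, ∑ j ∈ insert a s with i < j, f i * f j
        = (∑ i ∈ s, f i) * f a + ∑ i ∈ s, ∑ j ∈ s with i < j, f i * f j := by
      rw [sum_insert ha_notMem, h_above_max, sum_empty, zero_add, sum_mul, ← sum_add_distrib]
      refine sum_congr rfl fun i hi => ?_
      rw [h_above i hi, sum_insert (by simp [ha_notMem])]
    rw [h_pairs, sum_insert ha_notMem, sum_insert ha_notMem, add_sq, ih]
    ring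

lemma sq_sum_Icc_eq_sum_sq_add_two_mul_sum_lt (a b : ℕ) (f : ℕ → R) :
    (∑ i ∈ Icc a b, f i) ^ 2
      = ∑ i ∈ Icc a b, f i ^ 2 + 2 * ∑ i ∈ Icc a b, ∑ j ∈ Icc (i + 1) b, f i * f j := by
  have h_above : ∀ i ∈ Icc a b, {j ∈ Icc a b | i < j} = Icc (i + 1) b := by grind
  rw [sq_sum_eq_sum_sq_add_two_mul_sum_lt]
  congr 2
  exact sum_congr rfl fun i hi => by rw [h_above i hi]

end SqSum

section Discount

variable {ι R : Type*} [Semiring R] [PartialOrder R] {s : Finset ι} {d : ι → ℕ} {w : ι → R}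
  {r c : R}

lemma sum_pow_mul_lt_sum [IsStrictOrderedRing R] (hr₀ : 0 ≤ r) (hr₁ : r < 1)
    (hw : ∀ i ∈ s, 0 ≤ w i) (hw_pos : ∃ i ∈ s, d i ≠ 0 ∧ 0 < w i) :
    ∑ i ∈ s, r ^ d i * w i < ∑ i ∈ s, w i := by
  obtain ⟨k, hk, hdk, hwk⟩ := hw_pos
  exact sum_lt_sum
    (fun i hi => mul_le_of_le_one_left (hw i hi) (pow_le_one₀ hr₀ hr₁.le))
    ⟨k, hk, mul_lt_of_lt_one_left hwk (pow_lt_one₀ hr₀ hr₁ hdk)⟩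

lemma sum_pow_mul_le_mul_sum [IsOrderedRing R] (hr₀ : 0 ≤ r) (hr₁ : r ≤ 1) (hrc : r ≤ c)
    (hd : ∀ i ∈ s, d i ≠ 0) (hw : ∀ i ∈ s, 0 ≤ w i) :
    ∑ i ∈ s, r ^ d i * w i ≤ c * ∑ i ∈ s, w i := by
  rw [mul_sum]
  exact sum_le_sum fun i hi =>
    mul_le_mul_of_nonneg_right ((pow_le_of_le_one hr₀ hr₁ (hd i hi)).trans hrc) (hw i hi)

end Discount

lemma sum_sum_Icc_pow_sub_mul_le {R : Type*} [Semiring R] [PartialOrder R] [IsOrderedRing R]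
    {a b : ℕ} {t : ℕ → R} {r c : R} (ht : ∀ j ∈ Icc a b, 0 ≤ t j)
    (hr₀ : 0 ≤ r) (hr₁ : r ≤ 1) (hrc : r ≤ c) :
    ∑ i ∈ Icc a b, ∑ j ∈ Icc (i + 1) b, r ^ (j - i) * t i * t j
      ≤ c * ∑ i ∈ Icc a b, ∑ j ∈ Icc (i + 1) b, t i * t j := by
  simp only [mul_assoc]
  rw [mul_sum]
  refine sum_le_sum fun i hi => sum_pow_mul_le_mul_sum hr₀ hr₁ hrc (fun j hj => ?_) fun j hj => ?_
  · exact Nat.sub_ne_zero_of_lt (mem_Icc.mp hj).1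
  · exact mul_nonneg (ht i hi) (ht j (by grind))

theorem mwc_type1_credits_lt_general {R : Type*} [CommSemiring R] [PartialOrder R]
    [IsStrictOrderedRing R] {m : ℕ} {t : ℕ → R} (ht : ∀ j ∈ Icc 1 m, 0 ≤ t j)
    (ht_pos : ∃ j ∈ Ico 1 m, 0 < t j) {lam : R} (hlam0 : 0 ≤ lam) (hlam1 : lam < 1)
    {eta : R} (heta : lam ≤ 2 * eta) {C : R} (hC : 0 < C) :
    eta * ∑ j ∈ Icc 1 m, (t j) ^ 2
      + C * ∑ j ∈ Icc 1 m, lam ^ (m - j) * t j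
      + ∑ i ∈ Icc 1 m, ∑ j ∈ Icc (i + 1) m, lam ^ (j - i) * t i * t j
    < eta * (∑ j ∈ Icc 1 m, t j) ^ 2 + C * ∑ j ∈ Icc 1 m, t j := by
  have h_successors : ∑ j ∈ Icc 1 m, lam ^ (m - j) * t j < ∑ j ∈ Icc 1 m, t j := by
    obtain ⟨k, hk, htk⟩ := ht_pos
    exact sum_pow_mul_lt_sum hlam0 hlam1 ht ⟨k, by grind, by grind, htk⟩
  have h_pairs := sum_sum_Icc_pow_sub_mul_le ht hlam0 hlam1.le heta
  calc
    _ < eta * ∑ j ∈ Icc 1 m, t j ^ 2 + C * ∑ j ∈ Icc 1 m, t j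
          + 2 * eta * ∑ i ∈ Icc 1 m, ∑ j ∈ Icc (i + 1) m, t i * t j := by
      refine add_lt_add_of_lt_of_le ?_ h_pairs
      gcongr
    _ = eta * (∑ j ∈ Icc 1 m, t j) ^ 2 + C * ∑ j ∈ Icc 1 m, t j := by
      rw [sq_sum_Icc_eq_sum_sq_add_two_mul_sum_lt]
      ring

/-- Type-1 false-name attack: the total virtual credits of a chain of `m` replicas
with task efforts `t 1, …, t m` are strictly less than the virtual credits of the
original node. -/
theorem mwc_type1_credits_lt
    (m : ℕ) (hm : 2 ≤ m) (t : ℕ → ℝ) (ht : ∀ j ∈ Icc 1 m, 0 < t j)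
    (lam : ℝ) (hlam0 : 0 < lam) (hlam1 : lam < 1)
    (eta : ℝ) (heta : lam / 2 ≤ eta)
    (C : ℝ) (hC : 0 < C) :
    eta * ∑ j ∈ Icc 1 m, (t j) ^ 2
      + C * ∑ j ∈ Icc 1 m, lam ^ (m - j) * t j
      + ∑ i ∈ Icc 1 m, ∑ j ∈ Icc (i + 1) m, lam ^ (j - i) * t i * t j
    < eta * (∑ j ∈ Icc 1 m, t j) ^ 2 + C * ∑ j ∈ Icc 1 m, t j :=
  mwc_type1_credits_lt_general (fun j hj => (ht j hj).le)
    ⟨1, by grind, ht 1 (by grind)⟩ hlam0.le hlam1 (by linarith) hC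
end

section
/- Let m ≥ 2 be an integer, let t_1, …, t_m be positive real numbers, let λ ∈ (0,1), η ≥ λ/2, C > 0 and E > 0 be real numbers. Set b_v = η·(∑_{j=1}^m t_j)² + (∑_{j=1}^m t_j)·C, and for each j set b_j = η·t_j² + λ^{m−j}·t_j·C + t_j·∑_{k=j+1}^m λ^{k−j}·t_k. Then b_v/(b_v + E) > (∑_{j=1}^m b_j)/((∑_{j=1}^m b_j) + E). -/
open Finset

/-!
With noise factor `1` the winning probability `x / (x + E)` is strictly increasing in the credits
`x`, so it suffices that splitting loses credits. Expand `η (∑ tⱼ)²` into its diagonal and twice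
its upper triangle. What a replica `j` earns from a later replica `k` is at most
`λ tⱼ tₖ ≤ 2 η tⱼ tₖ`, which the upper triangle covers, while the contribution `C` is discounted by
`λ ^ (m - j) < 1` on its way to every replica `j` except the last.
-/

section UpperTriangle

variable {ι R : Type*} [LinearOrder ι]

theorem sq_sum_eq_sum_sq_add_two_mul_sum_filter_lt [CommSemiring R] (s : Finset ι) (f : ι → R) :
    (∑ i ∈ s, f i) ^ 2 = ∑ i ∈ s, f i ^ 2 + 2 * ∑ i ∈ s, f i * ∑ j ∈ s with i < j, f j := by
  induction s using Finset.induction_on_min with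
  | empty => simp
  | insert a s ha ih =>
    have ha_notMem : a ∉ s := fun h => (ha a h).false
    have filter_min : {j ∈ insert a s | a < j} = s := by
      rw [filter_insert, if_neg (lt_irrefl a), filter_true_of_mem ha]
    have filter_of_mem : ∀ i ∈ s, {j ∈ insert a s | i < j} = {j ∈ s | i < j} := fun i hi => by
      rw [filter_insert, if_neg (ha i hi).not_gt]
    have sum_filter_of_mem : ∑ i ∈ s, f i * ∑ j ∈ insert a s with i < j, f j
        = ∑ i ∈ s, f i * ∑ j ∈ s with i < j, f j :=
      sum_congr rfl fun i hi => by rw [filter_of_mem i hi]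
    rw [sum_insert ha_notMem, sum_insert ha_notMem, sum_insert ha_notMem, filter_min,
      sum_filter_of_mem, add_sq, ih]
    ring

theorem mul_sum_sq_add_sum_filter_lt_le_mul_sq_sum [CommSemiring R] [PartialOrder R]
    [IsOrderedRing R] {s : Finset ι} {f : ι → R} {w : ι → ι → R} {c : R}
    (hf : ∀ i ∈ s, 0 ≤ f i) (hw : ∀ i ∈ s, ∀ j ∈ s, i < j → w i j ≤ 2 * c) :
    c * ∑ i ∈ s, f i ^ 2 + ∑ i ∈ s, f i * ∑ j ∈ s with i < j, w i j * f j
      ≤ c * (∑ i ∈ s, f i) ^ 2 := by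
  have inner_le : ∀ i ∈ s, ∑ j ∈ s with i < j, w i j * f j ≤ 2 * c * ∑ j ∈ s with i < j, f j := by
    intro i hi
    rw [mul_sum]
    refine sum_le_sum fun j hj => ?_
    obtain ⟨hjs, hij⟩ := mem_filter.mp hj
    exact mul_le_mul_of_nonneg_right (hw i hi j hjs hij) (hf j hjs)
  calc c * ∑ i ∈ s, f i ^ 2 + ∑ i ∈ s, f i * ∑ j ∈ s with i < j, w i j * f j
      ≤ c * ∑ i ∈ s, f i ^ 2 + ∑ i ∈ s, f i * (2 * c * ∑ j ∈ s with i < j, f j) := by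
        gcongr with i hi
        · exact hf i hi
        · exact inner_le i hi
    _ = c * (∑ i ∈ s, f i) ^ 2 := by
        simp only [sq_sum_eq_sum_sq_add_two_mul_sum_filter_lt, mul_left_comm _ (2 * c), ← mul_sum]
        ring

end UpperTriangle

theorem filter_lt_Icc_eq_Icc_succ {a m j : ℕ} (hj : a ≤ j) :
    {k ∈ Icc a m | j < k} = Icc (j + 1) m := by
  ext k
  simp only [mem_filter, mem_Icc]
  omega

theorem sum_pow_sub_mul_lt_sum {R : Type*} [Semiring R] [PartialOrder R] [IsStrictOrderedRing R]
    {a m : ℕ} {t : ℕ → R} {lam : R} (hlam0 : 0 ≤ lam) (hlam1 : lam < 1)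
    (ht : ∀ j ∈ Icc a m, 0 ≤ t j) (htpos : ∃ j ∈ Ico a m, 0 < t j) :
    ∑ j ∈ Icc a m, lam ^ (m - j) * t j < ∑ j ∈ Icc a m, t j := by
  obtain ⟨i, hi, hti⟩ := htpos
  have him : m - i ≠ 0 := Nat.sub_ne_zero_of_lt (mem_Ico.mp hi).2
  exact sum_lt_sum
    (fun j hj => mul_le_of_le_one_left (ht j hj) (pow_le_one₀ hlam0 hlam1.le))
    ⟨i, Ico_subset_Icc_self hi, mul_lt_of_lt_one_left hti (pow_lt_one₀ hlam0 hlam1 him)⟩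

theorem strictMonoOn_div_add_const {K : Type*} [Field K] [LinearOrder K] [IsStrictOrderedRing K]
    {E : K} (hE : 0 < E) : StrictMonoOn (fun x => x / (x + E)) (Set.Ici 0) := by
  intro x hx y hy hxy
  refine (div_lt_div_iff₀ (add_pos_of_nonneg_of_pos hx hE) (add_pos_of_nonneg_of_pos hy hE)).mpr ?_
  linarith [mul_lt_mul_of_pos_right hxy hE]

/-- The virtual credits of a player with task effort `x` and discounted successor contribution
`S`. The same formula serves the original node and each of its replicas. -/
def virtualCredits {R : Type*} [CommSemiring R] (eta x S : R) : R :=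
  eta * x ^ 2 + x * S

/-- The discounted successor contribution of replica `j` in a chain of replicas `1, …, m` with
efforts `t`, when the original node had successor contribution `C`: the successors of the original
node hang below replica `m`, and the replicas after `j` are themselves successors of `j`. -/
def chainContribution {R : Type*} [CommSemiring R] (lam C : R) (m : ℕ) (t : ℕ → R) (j : ℕ) : R :=
  lam ^ (m - j) * C + ∑ k ∈ Icc (j + 1) m, lam ^ (k - j) * t k

theorem virtualCredits_chainContribution {R : Type*} [CommSemiring R] (eta lam C : R) (m : ℕ)
    (t : ℕ → R) (j : ℕ) :
    virtualCredits eta (t j) (chainContribution lam C m t j)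
      = eta * t j ^ 2 + lam ^ (m - j) * t j * C
        + t j * ∑ k ∈ Icc (j + 1) m, lam ^ (k - j) * t k := by
  rw [virtualCredits, chainContribution]
  ring

section ReplicaChain

variable {R : Type*} [CommSemiring R] [PartialOrder R] {m : ℕ} {t : ℕ → R} {lam eta C : R}

theorem virtualCredits_chainContribution_nonneg [IsOrderedRing R]
    (ht : ∀ j ∈ Icc 1 m, 0 ≤ t j) (hlam0 : 0 ≤ lam) (heta : 0 ≤ eta) (hC : 0 ≤ C)
    {j : ℕ} (hj : j ∈ Icc 1 m) :
    0 ≤ virtualCredits eta (t j) (chainContribution lam C m t j) := by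
  have htj : 0 ≤ t j := ht j hj
  have hreplicas : 0 ≤ ∑ k ∈ Icc (j + 1) m, lam ^ (k - j) * t k :=
    sum_nonneg fun k hk =>
      mul_nonneg (pow_nonneg hlam0 _) (ht k (Icc_subset_Icc_left (Nat.le_add_left 1 j) hk))
  rw [virtualCredits, chainContribution]
  positivity

theorem sum_virtualCredits_chainContribution_lt [IsStrictOrderedRing R]
    (ht : ∀ j ∈ Icc 1 m, 0 ≤ t j) (htpos : ∃ j ∈ Ico 1 m, 0 < t j)
    (hlam0 : 0 ≤ lam) (hlam1 : lam < 1) (heta : lam ≤ 2 * eta) (hC : 0 < C) :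
    ∑ j ∈ Icc 1 m, virtualCredits eta (t j) (chainContribution lam C m t j)
      < virtualCredits eta (∑ j ∈ Icc 1 m, t j) C := by
  have cross_terms_le : eta * ∑ j ∈ Icc 1 m, t j ^ 2
        + ∑ j ∈ Icc 1 m, t j * ∑ k ∈ Icc 1 m with j < k, lam ^ (k - j) * t k
      ≤ eta * (∑ j ∈ Icc 1 m, t j) ^ 2 :=
    mul_sum_sq_add_sum_filter_lt_le_mul_sq_sum ht fun j _ k _ hjk =>
      (pow_le_of_le_one hlam0 hlam1.le (Nat.sub_ne_zero_of_lt hjk)).trans heta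
  have filter_lt : ∑ j ∈ Icc 1 m, t j * ∑ k ∈ Icc 1 m with j < k, lam ^ (k - j) * t k
      = ∑ j ∈ Icc 1 m, t j * ∑ k ∈ Icc (j + 1) m, lam ^ (k - j) * t k :=
    sum_congr rfl fun j hj => by rw [filter_lt_Icc_eq_Icc_succ (mem_Icc.mp hj).1]
  calc ∑ j ∈ Icc 1 m, virtualCredits eta (t j) (chainContribution lam C m t j)
      = (eta * ∑ j ∈ Icc 1 m, t j ^ 2
          + ∑ j ∈ Icc 1 m, t j * ∑ k ∈ Icc 1 m with j < k, lam ^ (k - j) * t k)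
        + (∑ j ∈ Icc 1 m, lam ^ (m - j) * t j) * C := by
        rw [filter_lt, mul_sum, sum_mul]
        simp only [virtualCredits_chainContribution, sum_add_distrib]
        ring
    _ < eta * (∑ j ∈ Icc 1 m, t j) ^ 2 + (∑ j ∈ Icc 1 m, t j) * C :=
        add_lt_add_of_le_of_lt cross_terms_le
          (mul_lt_mul_of_pos_right (sum_pow_sub_mul_lt_sum hlam0 hlam1 ht htpos) hC)

end ReplicaChain

theorem mwc_type1_prob_gt_general {K : Type*} [Field K] [LinearOrder K] [IsStrictOrderedRing K]
    {m : ℕ} {t : ℕ → K} (ht : ∀ j ∈ Icc 1 m, 0 ≤ t j) (htpos : ∃ j ∈ Ico 1 m, 0 < t j)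
    {lam : K} (hlam0 : 0 ≤ lam) (hlam1 : lam < 1) {eta : K} (heta : lam / 2 ≤ eta)
    {C : K} (hC : 0 < C) {E : K} (hE : 0 < E) :
    virtualCredits eta (∑ j ∈ Icc 1 m, t j) C / (virtualCredits eta (∑ j ∈ Icc 1 m, t j) C + E)
      > (∑ j ∈ Icc 1 m, virtualCredits eta (t j) (chainContribution lam C m t j))
        / ((∑ j ∈ Icc 1 m, virtualCredits eta (t j) (chainContribution lam C m t j)) + E) := by
  have heta0 : 0 ≤ eta := by linarith
  have hloss := sum_virtualCredits_chainContribution_lt ht htpos hlam0 hlam1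
    ((div_le_iff₀' two_pos).mp heta) hC
  have hreplicas := sum_nonneg fun _ hj =>
    virtualCredits_chainContribution_nonneg ht hlam0 heta0 hC.le hj
  exact strictMonoOn_div_add_const hE hreplicas (hreplicas.trans hloss.le) hloss

/-- Type-1 false-name attacks are unprofitable at noise factor `σ = 1`: the
original node's winning probability strictly exceeds the total winning
probability of its chain of replicas. -/
theorem mwc_type1_prob_gt
    (m : ℕ) (hm : 2 ≤ m) (t : ℕ → ℝ) (ht : ∀ j ∈ Icc 1 m, 0 < t j)
    (lam : ℝ) (hlam0 : 0 < lam) (hlam1 : lam < 1)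
    (eta : ℝ) (heta : lam / 2 ≤ eta)
    (C : ℝ) (hC : 0 < C) (E : ℝ) (hE : 0 < E)
    (bv : ℝ)
    (hbv : bv = eta * (∑ j ∈ Icc 1 m, t j) ^ 2 + (∑ j ∈ Icc 1 m, t j) * C)
    (b : ℕ → ℝ)
    (hb : ∀ j ∈ Icc 1 m,
      b j = eta * (t j) ^ 2 + lam ^ (m - j) * t j * C
        + t j * ∑ k ∈ Icc (j + 1) m, lam ^ (k - j) * t k) :
    bv / (bv + E)
      > (∑ j ∈ Icc 1 m, b j) / ((∑ j ∈ Icc 1 m, b j) + E) := by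
  simp only [hbv, sum_congr rfl hb, ← virtualCredits_chainContribution]
  exact mwc_type1_prob_gt_general (fun j hj => (ht j hj).le)
    ⟨1, left_mem_Ico.mpr hm, ht 1 (left_mem_Icc.mpr (one_le_two.trans hm))⟩
    hlam0.le hlam1 heta hC hE
end
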